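/- Let Ω ⊂ ℝ² be a bounded open set and M > 0 a constant such that for every t > 0 the Lebesgue measure of {x ∈ Ω : dist(x, ∂Ω) ≤ t} is at most M·t. Let 0 < ε₁ ≤ ε₂² ≤ 1, let C > 0, and let E : Ω → ℝ be twice continuously differentiable with, for all x ∈ Ω and d(x) := dist(x, ∂Ω): |E(x)| ≤ C (ε₁/ε₂²) e^{−ε₂ d(x)/ε₁}, |∇E(x)| ≤ C ε₂⁻¹ e^{−ε₂ d(x)/ε₁}, and |ΔE(x)| ≤ C ε₁⁻¹ e^{−ε₂ d(x)/ε₁}. Then the squared balanced norm of (E, ε₁ΔE) is uniformly bounded: (ε₂/ε₁) ‖ε₁ΔE‖²_{L²(Ω)} + ε₂ ‖∇E‖²_{L²(Ω)} + ‖E‖²_{L²(Ω)} ≤ 2 C² M, uniformly in ε₁ and ε₂. -/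

import Mathlib

open MeasureTheory Real Metric

/-- The Laplacian of a function on `ℝ²`, as the sum of the second partial derivatives. -/
noncomputable def lap (u : EuclideanSpace ℝ (Fin 2) → ℝ) (x : EuclideanSpace ℝ (Fin 2)) : ℝ :=
  ∑ i : Fin 2,
    fderiv ℝ (fun y => fderiv ℝ u y (EuclideanSpace.single i 1)) x (EuclideanSpace.single i 1)

/-!
A linear bound `M t` on the measure of the sublevel sets `{d ≤ t}` gives, by the layer cake formula,
`∫ exp (-a d) ≤ ∫₀¹ M (-log s / a) ds = M / a`. With `a = 2 ε₂ / ε₁`, a function bounded by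
`K exp (-ε₂ d / ε₁)` has squared `L²` norm at most `K² M ε₁ / (2 ε₂)`. Put `r = ε₁ / ε₂² ≤ 1`. The
three weighted terms of the balanced norm are then at most `C² M / 2` times `1`, `r` and `r³ ε₂`.
-/

section LinearSublevelGrowth

variable {α F : Type*} [MeasurableSpace α] [NormedAddCommGroup F] {μ : Measure α}
  {d : α → ℝ} {M : ℝ}

lemma measure_sublevel_le_of_forall_pos
    (hd : ∀ t : ℝ, 0 < t → μ {x | d x ≤ t} ≤ ENNReal.ofReal (M * t)) (t : ℝ) :
    μ {x | d x ≤ t} ≤ ENNReal.ofReal (M * t) := by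
  rcases lt_or_ge 0 t with ht | ht
  · exact hd t ht
  have hlim : Filter.Tendsto (fun s : ℝ => ENNReal.ofReal (M * s)) (nhdsWithin 0 (Set.Ioi 0))
      (nhds 0) := by
    have hcont : Continuous fun s : ℝ => ENNReal.ofReal (M * s) :=
      ENNReal.continuous_ofReal.comp (continuous_const_mul M)
    exact (hcont.tendsto' 0 0 (by simp)).mono_left nhdsWithin_le_nhds
  have hnull : μ {x | d x ≤ t} ≤ 0 := by
    refine ge_of_tendsto hlim ?_
    filter_upwards [self_mem_nhdsWithin] with s (hs : 0 < s)
    exact (measure_mono fun x (hx : d x ≤ t) => hx.trans (ht.trans hs.le)).trans (hd s hs)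
  exact hnull.trans zero_le

lemma lintegral_Ioi_ofReal_neg_log :
    ∫⁻ t in Set.Ioi (0 : ℝ), ENNReal.ofReal (-log t) = 1 := by
  have htail : ∫⁻ t in Set.Ioi (1 : ℝ), ENNReal.ofReal (-log t) = 0 :=
    setLIntegral_eq_zero measurableSet_Ioi fun t (ht : 1 < t) =>
      ENNReal.ofReal_of_nonpos (neg_nonpos.2 (log_nonneg ht.le))
  have hint : IntegrableOn (fun t : ℝ => -log t) (Set.Ioc 0 1) :=
    ((intervalIntegrable_iff_integrableOn_Ioc_of_le zero_le_one).1
      intervalIntegral.intervalIntegrable_log').neg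
  have hnonneg : 0 ≤ᵐ[volume.restrict (Set.Ioc (0 : ℝ) 1)] fun t => -log t :=
    ae_restrict_of_forall_mem measurableSet_Ioc fun t ht =>
      neg_nonneg.2 (log_nonpos ht.1.le ht.2)
  have hval : ∫ t in Set.Ioc (0 : ℝ) 1, -log t = 1 := by
    rw [← intervalIntegral.integral_of_le zero_le_one, intervalIntegral.integral_neg, integral_log]
    simp
  rw [← Set.Ioc_union_Ioi_eq_Ioi (zero_le_one : (0 : ℝ) ≤ 1),
    lintegral_union measurableSet_Ioi (Set.Ioc_disjoint_Ioi le_rfl), htail, add_zero,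
    ← ofReal_integral_eq_lintegral_ofReal hint hnonneg, hval, ENNReal.ofReal_one]

variable (hdm : AEMeasurable d μ) (hM : 0 ≤ M)
  (hd : ∀ t : ℝ, 0 < t → μ {x | d x ≤ t} ≤ ENNReal.ofReal (M * t))
include hdm hM hd

lemma lintegral_exp_neg_mul_le {a : ℝ} (ha : 0 < a) :
    ∫⁻ x, ENNReal.ofReal (exp (-(a * d x))) ∂μ ≤ ENNReal.ofReal (M / a) := by
  have hsuper : ∀ t ∈ Set.Ioi (0 : ℝ), μ {x | t < exp (-(a * d x))} ≤
      ENNReal.ofReal (M / a) * ENNReal.ofReal (-log t) := fun t ht => by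
    have hsub : {x | t < exp (-(a * d x))} ⊆ {x | d x ≤ -log t / a} := fun x hx => by
      have hlog : log t < -(a * d x) := (log_lt_iff_lt_exp ht).2 hx
      exact (le_div_iff₀ ha).2 (by linarith)
    calc μ {x | t < exp (-(a * d x))}
        ≤ ENNReal.ofReal (M * (-log t / a)) :=
          (measure_mono hsub).trans (measure_sublevel_le_of_forall_pos hd _)
      _ = ENNReal.ofReal (M / a) * ENNReal.ofReal (-log t) := by
          rw [← ENNReal.ofReal_mul (by positivity)]
          ring_nf
  calc ∫⁻ x, ENNReal.ofReal (exp (-(a * d x))) ∂μ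
      = ∫⁻ t in Set.Ioi (0 : ℝ), μ {x | t < exp (-(a * d x))} :=
        lintegral_eq_lintegral_meas_lt μ (.of_forall fun _ => (exp_pos _).le)
          (hdm.const_mul a).neg.exp
    _ ≤ ∫⁻ t in Set.Ioi (0 : ℝ), ENNReal.ofReal (M / a) * ENNReal.ofReal (-log t) :=
        setLIntegral_mono' measurableSet_Ioi hsuper
    _ = ENNReal.ofReal (M / a) := by
        rw [lintegral_const_mul' _ _ ENNReal.ofReal_ne_top, lintegral_Ioi_ofReal_neg_log, mul_one]

lemma integrable_exp_neg_mul {a : ℝ} (ha : 0 < a) :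
    Integrable (fun x => exp (-(a * d x))) μ :=
  (lintegral_ofReal_ne_top_iff_integrable (hdm.const_mul a).neg.exp.aestronglyMeasurable
    (.of_forall fun _ => (exp_pos _).le)).1
    ((lintegral_exp_neg_mul_le hdm hM hd ha).trans_lt ENNReal.ofReal_lt_top).ne

lemma integral_exp_neg_mul_le {a : ℝ} (ha : 0 < a) :
    ∫ x, exp (-(a * d x)) ∂μ ≤ M / a := by
  rw [← ENNReal.ofReal_le_ofReal_iff (by positivity), ofReal_integral_eq_lintegral_ofReal
    (integrable_exp_neg_mul hdm hM hd ha) (.of_forall fun _ => (exp_pos _).le)]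
  exact lintegral_exp_neg_mul_le hdm hM hd ha

lemma memLp_two_of_norm_le_exp_neg_mul {b K : ℝ} (hb : 0 < b) {f : α → F}
    (hfm : AEStronglyMeasurable f μ) (hf : ∀ᵐ x ∂μ, ‖f x‖ ≤ K * exp (-(b * d x))) :
    MemLp f 2 μ := by
  have hexp : MemLp (fun x => exp (-(b * d x))) 2 μ := by
    have hm : AEStronglyMeasurable (fun x => exp (-(b * d x))) μ :=
      (hdm.const_mul b).neg.exp.aestronglyMeasurable
    refine (memLp_two_iff_integrable_sq hm).2 ?_
    refine (integrable_exp_neg_mul hdm hM hd (mul_pos two_pos hb)).congr (.of_forall fun x => ?_)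
    simp only [← exp_nat_mul]
    ring_nf
  exact hexp.of_le_mul hfm (by simpa only [norm_eq_abs, abs_exp] using hf)

lemma integral_norm_sq_le_of_norm_le_exp_neg_mul {b K : ℝ} (hb : 0 < b) {f : α → F}
    (hf : ∀ᵐ x ∂μ, ‖f x‖ ≤ K * exp (-(b * d x))) :
    ∫ x, ‖f x‖ ^ 2 ∂μ ≤ K ^ 2 * (M / (2 * b)) := by
  have h2b : 0 < 2 * b := by positivity
  have hsq : ∀ᵐ x ∂μ, ‖f x‖ ^ 2 ≤ K ^ 2 * exp (-(2 * b * d x)) := by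
    filter_upwards [hf] with x hx
    calc ‖f x‖ ^ 2 ≤ (K * exp (-(b * d x))) ^ 2 := by gcongr
      _ = K ^ 2 * exp (-(2 * b * d x)) := by rw [mul_pow, ← exp_nat_mul]; ring_nf
  calc ∫ x, ‖f x‖ ^ 2 ∂μ
      ≤ ∫ x, K ^ 2 * exp (-(2 * b * d x)) ∂μ :=
        integral_mono_of_nonneg (.of_forall fun _ => sq_nonneg _)
          ((integrable_exp_neg_mul hdm hM hd h2b).const_mul _) hsq
    _ = K ^ 2 * ∫ x, exp (-(2 * b * d x)) ∂μ := integral_const_mul _ _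
    _ ≤ K ^ 2 * (M / (2 * b)) := by gcongr; exact integral_exp_neg_mul_le hdm hM hd h2b

end LinearSublevelGrowth

section BalancedNorm

variable {α F : Type*} [MeasurableSpace α] [NormedAddCommGroup F]

/-- The squared balanced norm `|||(u, w)|||_B²` with respect to `μ`. The gradient of `u` is a
separate argument `g`, so that the estimates need no differentiable structure. -/
noncomputable def balancedNormSq (μ : Measure α) (ε₁ ε₂ : ℝ) (u : α → ℝ) (g : α → F)
    (w : α → ℝ) : ℝ :=
  (ε₂ / ε₁) * (∫ x, w x ^ 2 ∂μ) + ε₂ * (∫ x, ‖g x‖ ^ 2 ∂μ) + ∫ x, u x ^ 2 ∂μ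

lemma fast_layer_weighted_sum_le {ε₁ ε₂ M : ℝ} (C : ℝ) (hM : 0 ≤ M) (hε₁ : 0 < ε₁) (hε₂ : 0 < ε₂)
    (hε₁₂ : ε₁ ≤ ε₂ ^ 2) (hε₂1 : ε₂ ^ 2 ≤ 1) :
    (ε₂ / ε₁) * (C ^ 2 * (M / (2 * (ε₂ / ε₁)))) + ε₂ * ((C * ε₂⁻¹) ^ 2 * (M / (2 * (ε₂ / ε₁))))
      + (C * (ε₁ / ε₂ ^ 2)) ^ 2 * (M / (2 * (ε₂ / ε₁))) ≤ 3 / 2 * C ^ 2 * M := by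
  have hr : ε₁ / ε₂ ^ 2 ≤ 1 := (div_le_one (by positivity)).2 hε₁₂
  have hr3 : (ε₁ / ε₂ ^ 2) ^ 3 * ε₂ ≤ 1 :=
    mul_le_one₀ (pow_le_one₀ (by positivity) hr) hε₂.le ((sq_le_one_iff₀ hε₂.le).1 hε₂1)
  calc _ = C ^ 2 * M / 2 * (1 + ε₁ / ε₂ ^ 2 + (ε₁ / ε₂ ^ 2) ^ 3 * ε₂) := by field_simp
    _ ≤ C ^ 2 * M / 2 * (1 + 1 + 1) := by gcongr
    _ = 3 / 2 * C ^ 2 * M := by ring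

lemma balancedNormSq_le_of_norm_le_exp {μ : Measure α} {d : α → ℝ} {M ε₁ ε₂ C : ℝ}
    (hdm : AEMeasurable d μ) (hM : 0 ≤ M)
    (hd : ∀ t : ℝ, 0 < t → μ {x | d x ≤ t} ≤ ENNReal.ofReal (M * t))
    (hε₁ : 0 < ε₁) (hε₂ : 0 < ε₂) (hε₁₂ : ε₁ ≤ ε₂ ^ 2) (hε₂1 : ε₂ ^ 2 ≤ 1)
    {u w : α → ℝ} {g : α → F}
    (hu : ∀ᵐ x ∂μ, ‖u x‖ ≤ C * (ε₁ / ε₂ ^ 2) * exp (-(ε₂ / ε₁ * d x)))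
    (hg : ∀ᵐ x ∂μ, ‖g x‖ ≤ C * ε₂⁻¹ * exp (-(ε₂ / ε₁ * d x)))
    (hw : ∀ᵐ x ∂μ, ‖w x‖ ≤ C * exp (-(ε₂ / ε₁ * d x))) :
    balancedNormSq μ ε₁ ε₂ u g w ≤ 3 / 2 * C ^ 2 * M := by
  have hb : 0 < ε₂ / ε₁ := by positivity
  have hu2 := integral_norm_sq_le_of_norm_le_exp_neg_mul hdm hM hd hb hu
  have hg2 := integral_norm_sq_le_of_norm_le_exp_neg_mul hdm hM hd hb hg
  have hw2 := integral_norm_sq_le_of_norm_le_exp_neg_mul hdm hM hd hb hw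
  simp only [norm_eq_abs, sq_abs] at hu2 hw2
  refine le_trans ?_ (fast_layer_weighted_sum_le C hM hε₁ hε₂ hε₁₂ hε₂1)
  unfold balancedNormSq
  gcongr

lemma pos_of_norm_le_mul_inv_mul_exp {C ε s : ℝ} {v : F} (hC : 0 < C) (hε : ε ≠ 0)
    (hv : ‖v‖ ≤ C * ε⁻¹ * exp s) : 0 < ε := by
  have hinv : 0 ≤ C * ε⁻¹ := nonneg_of_mul_nonneg_left ((norm_nonneg v).trans hv) (exp_pos s)
  exact (inv_nonneg.1 (nonneg_of_mul_nonneg_right hinv hC)).lt_of_ne' hε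

theorem balanced_norm_fast_layer_general {μ : Measure α} {Ω : Set α} (hΩ : MeasurableSet Ω)
    {d : α → ℝ} (hdm : AEMeasurable d (μ.restrict Ω)) {M : ℝ} (hM : 0 ≤ M)
    (hstrip : ∀ t : ℝ, 0 < t → μ {x ∈ Ω | d x ≤ t} ≤ ENNReal.ofReal (M * t))
    {ε₁ ε₂ : ℝ} (hε₁ : 0 < ε₁) (hε₁₂ : ε₁ ≤ ε₂ ^ 2) (hε₂1 : ε₂ ^ 2 ≤ 1) {C : ℝ} (hC : 0 < C)
    {u w : α → ℝ} {g : α → F} (hum : AEStronglyMeasurable u (μ.restrict Ω))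
    (hgm : AEStronglyMeasurable g (μ.restrict Ω)) (hwm : AEStronglyMeasurable w (μ.restrict Ω))
    (hu : ∀ x ∈ Ω, |u x| ≤ C * (ε₁ / ε₂ ^ 2) * exp (-(ε₂ * d x) / ε₁))
    (hg : ∀ x ∈ Ω, ‖g x‖ ≤ C * ε₂⁻¹ * exp (-(ε₂ * d x) / ε₁))
    (hw : ∀ x ∈ Ω, |w x| ≤ C * ε₁⁻¹ * exp (-(ε₂ * d x) / ε₁)) :
    (MemLp u 2 (μ.restrict Ω) ∧ MemLp g 2 (μ.restrict Ω) ∧ MemLp w 2 (μ.restrict Ω)) ∧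
      balancedNormSq (μ.restrict Ω) ε₁ ε₂ u g (fun x => ε₁ * w x) ≤ 3 / 2 * C ^ 2 * M := by
  rcases Ω.eq_empty_or_nonempty with rfl | ⟨x₀, hx₀⟩
  · simp only [Measure.restrict_empty, memLp_measure_zero, balancedNormSq, integral_zero_measure]
    exact ⟨⟨trivial, trivial, trivial⟩, by simp only [mul_zero, add_zero]; positivity⟩
  have hε₂ : 0 < ε₂ :=
    pos_of_norm_le_mul_inv_mul_exp hC (pow_ne_zero_iff two_ne_zero |>.1 (hε₁.trans_le hε₁₂).ne')
      (hg x₀ hx₀)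
  have hd : ∀ t : ℝ, 0 < t → μ.restrict Ω {x | d x ≤ t} ≤ ENNReal.ofReal (M * t) := fun t ht => by
    rw [Measure.restrict_apply' hΩ, Set.inter_comm]
    exact hstrip t ht
  have hrate (x : α) : -(ε₂ * d x) / ε₁ = -(ε₂ / ε₁ * d x) := by ring
  simp only [hrate, ← norm_eq_abs] at hu hg hw
  have hεw : ∀ x ∈ Ω, ‖ε₁ * w x‖ ≤ C * exp (-(ε₂ / ε₁ * d x)) := fun x hx => by
    calc ‖ε₁ * w x‖ = ε₁ * ‖w x‖ := by rw [norm_mul, norm_of_nonneg hε₁.le]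
      _ ≤ ε₁ * (C * ε₁⁻¹ * exp (-(ε₂ / ε₁ * d x))) := by gcongr; exact hw x hx
      _ = C * exp (-(ε₂ / ε₁ * d x)) := by field_simp
  replace hu := ae_restrict_of_forall_mem (μ := μ) hΩ hu
  replace hg := ae_restrict_of_forall_mem (μ := μ) hΩ hg
  replace hw := ae_restrict_of_forall_mem (μ := μ) hΩ hw
  have hb : 0 < ε₂ / ε₁ := by positivity
  exact ⟨⟨memLp_two_of_norm_le_exp_neg_mul hdm hM hd hb hum hu,
    memLp_two_of_norm_le_exp_neg_mul hdm hM hd hb hgm hg,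
    memLp_two_of_norm_le_exp_neg_mul hdm hM hd hb hwm hw⟩,
    balancedNormSq_le_of_norm_le_exp hdm hM hd hε₁ hε₂ hε₁₂ hε₂1 hu hg
      (ae_restrict_of_forall_mem hΩ hεw)⟩

end BalancedNorm

lemma continuous_gradient_of_contDiff {V : Type*} [NormedAddCommGroup V] [InnerProductSpace ℝ V]
    [CompleteSpace V] {f : V → ℝ} (hf : ContDiff ℝ 1 f) : Continuous (gradient f) :=
  (InnerProductSpace.toDual ℝ V).symm.continuous.comp (hf.continuous_fderiv one_ne_zero)

lemma continuous_lap {u : EuclideanSpace ℝ (Fin 2) → ℝ} (hu : ContDiff ℝ 2 u) :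
    Continuous (lap u) := by
  refine continuous_finsetSum _ fun i _ => ?_
  have hpartial : ContDiff ℝ 1 fun y => fderiv ℝ u y (EuclideanSpace.single i 1) :=
    (hu.fderiv_right (by norm_num)).clm_apply contDiff_const
  exact (hpartial.continuous_fderiv one_ne_zero).clm_apply continuous_const

/-- Balanced norm of the fast boundary layer component `E₁ ~ (ε₁/ε₂²) e^{−ε₂ dist(x,∂Ω)/ε₁}`:
`|||(E, ε₁ΔE)|||_B² ≤ 2 C² M`, uniformly in `ε₁, ε₂`. -/
theorem balanced_norm_fast_layer
    (Ω : Set (EuclideanSpace ℝ (Fin 2)))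
    (hΩ_open : IsOpen Ω) (hΩ_bdd : Bornology.IsBounded Ω)
    (M : ℝ) (hM : 0 < M)
    (hstrip : ∀ t : ℝ, 0 < t →
      volume {x ∈ Ω | infDist x (frontier Ω) ≤ t} ≤ ENNReal.ofReal (M * t))
    (ε₁ ε₂ : ℝ) (hε₁ : 0 < ε₁) (hε₁₂ : ε₁ ≤ ε₂ ^ 2) (hε₂1 : ε₂ ^ 2 ≤ 1)
    (C : ℝ) (hC : 0 < C)
    (E : EuclideanSpace ℝ (Fin 2) → ℝ) (hE_smooth : ContDiff ℝ 2 E)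
    (hE0 : ∀ x ∈ Ω, |E x| ≤
      C * (ε₁ / ε₂ ^ 2) * Real.exp (-(ε₂ * infDist x (frontier Ω)) / ε₁))
    (hE1 : ∀ x ∈ Ω, ‖gradient E x‖ ≤
      C * ε₂⁻¹ * Real.exp (-(ε₂ * infDist x (frontier Ω)) / ε₁))
    (hE2 : ∀ x ∈ Ω, |lap E x| ≤
      C * ε₁⁻¹ * Real.exp (-(ε₂ * infDist x (frontier Ω)) / ε₁)) :
    (ε₂ / ε₁) * (∫ x in Ω, (ε₁ * lap E x) ^ 2) + ε₂ * (∫ x in Ω, ‖gradient E x‖ ^ 2)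
      + (∫ x in Ω, E x ^ 2)
      ≤ 2 * C ^ 2 * M := by
  exact (balanced_norm_fast_layer_general hΩ_open.measurableSet
    (continuous_infDist_pt _).aemeasurable hM.le hstrip hε₁ hε₁₂ hε₂1 hC
    hE_smooth.continuous.aestronglyMeasurable
    (continuous_gradient_of_contDiff (hE_smooth.of_le one_le_two)).aestronglyMeasurable
    (continuous_lap hE_smooth).aestronglyMeasurable hE0 hE1 hE2).2.trans
      (by gcongr; norm_num)
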